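/- arXiv:2102.08010 — 3 statements merged into one kernel-verified Lean document; each statement's English description precedes it below -/
import Mathlib

section
/- In the field ℚ(t) of rational functions, Δ_{2,2,2,6}(t) = P(t)·Or_{2,2,2,6}(t), where P(t) = (1−t⁸)(1−t¹⁰)/((1−t²)(1−t⁶)(1−t⁵)(1−t⁴)). (This is the identity ∏_{j=1}^{2} ζ̄_{X,j}(t) = P_{X̃₀}(t)·Or_{X̃₀}(t) of the main theorem for the virtual singularity X = J′_{2,−1}, whose dual series has k=0 element J′_{2,0} with weight system (2,6,5,4; 8,10) and whose Gabrielov numbers are 2,2;2,6.) -/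
/-!
Both sides equal the polynomial `(1 + t) ^ 2 * (1 + t ^ 4) * (1 + t ^ 5)`. On the right, one factor
`1 - t ^ 2` and the factor `1 - t ^ 6` of the orbit function cancel against the weights, the other
two factors `1 - t ^ 2` are divided by `(1 - t) ^ 2`, and `1 - t ^ 8`, `1 - t ^ 10` by `1 - t ^ 4`,
`1 - t ^ 5`. On the left, every `(t ^ n - 1) / (t - 1)` is the geometric sum
`1 + t + ⋯ + t ^ (n - 1)`, and the rest is expansion. The cancellations are legitimate because
`t` is transcendental, so `1 - t ^ n ≠ 0` for `n ≠ 0`.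
-/

open Finset

/-- The generator `t` of the field `ℚ(t)` of rational functions. -/
noncomputable def t : RatFunc ℚ := RatFunc.X

/-- `Δ_{γ₁,γ₂,γ₃,γ₄}(t)`, the characteristic polynomial of the Coxeter element
corresponding to the graph `S_{γ₁,γ₂,γ₃,γ₄}`. -/
noncomputable def Δ (γ : Fin 4 → ℕ) : RatFunc ℚ :=
  (t ^ 3 - 2 * t ^ 2 - 2 * t + 1) * ∏ i, (t ^ γ i - 1) / (t - 1)
    + t ^ 2 * ∑ i, ((t ^ (γ i - 1) - 1) / (t - 1)) *
        ∏ j ∈ univ.erase i, (t ^ γ j - 1) / (t - 1)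

/-- `Or_{γ₁,γ₂,γ₃,γ₄}(t) = (1-t)⁻² · ∏ᵢ (1 - t^{γᵢ})`. -/
noncomputable def Orb (γ : Fin 4 → ℕ) : RatFunc ℚ :=
  ((1 - t) ^ 2)⁻¹ * ∏ i, (1 - t ^ γ i)

lemma t_pow_ne_one {n : ℕ} (hn : n ≠ 0) : t ^ n ≠ 1 := by
  have hX : (Polynomial.X ^ n : Polynomial ℚ) ≠ 1 := fun h => hn <| by
    simpa using congrArg Polynomial.natDegree h
  rw [t, ← RatFunc.algebraMap_X, ← map_pow]
  exact fun h => hX (RatFunc.algebraMap_injective ℚ (h.trans (map_one _).symm))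

/-- The common polynomial value, computed from the Coxeter side. -/
lemma Δ_eq : Δ ![2, 2, 2, 6] = (1 + t) ^ 2 * (1 + t ^ 4) * (1 + t ^ 5) := by
  have ht : t ≠ 1 := by simpa using t_pow_ne_one one_ne_zero
  have geom (n : ℕ) : (t ^ n - 1) / (t - 1) = ∑ i ∈ range n, t ^ i := (geom_sum_eq ht n).symm
  have e0 : (univ.erase 0 : Finset (Fin 4)) = {1, 2, 3} := by decide
  have e1 : (univ.erase 1 : Finset (Fin 4)) = {0, 2, 3} := by decide
  have e2 : (univ.erase 2 : Finset (Fin 4)) = {0, 1, 3} := by decide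
  have e3 : (univ.erase 3 : Finset (Fin 4)) = {0, 1, 2} := by decide
  simp only [Δ, geom, Fin.sum_univ_four, Fin.prod_univ_four, e0, e1, e2, e3]
  simp [sum_range_succ]
  ring

/-- The main theorem for the virtual singularity `J'_{2,-1}` (Gabrielov numbers
`2,2;2,6`; dual `k=0` element `J'_{2,0}` with weight system `(2,6,5,4;8,10)`). -/
theorem stmt_12 :
    Δ ![2, 2, 2, 6]
      = (1 - t ^ 8) * (1 - t ^ 10) /
          ((1 - t ^ 2) * (1 - t ^ 6) * (1 - t ^ 5) * (1 - t ^ 4))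
        * Orb ![2, 2, 2, 6] := by
  have h {n : ℕ} (hn : n ≠ 0) : 1 - t ^ n ≠ 0 := sub_ne_zero.2 (t_pow_ne_one hn).symm
  have h1 : 1 - t ≠ 0 := by simpa using h one_ne_zero
  have h2 := h two_ne_zero
  have h4 := h four_ne_zero
  have h5 := h (n := 5) (by norm_num)
  have h6 := h (n := 6) (by norm_num)
  have hO : Orb ![2, 2, 2, 6] = ((1 - t) ^ 2)⁻¹ * ((1 - t ^ 2) ^ 3 * (1 - t ^ 6)) := by
    rw [Orb, Fin.prod_univ_four]
    change _ * ((1 - t ^ 2) * (1 - t ^ 2) * (1 - t ^ 2) * (1 - t ^ 6)) = _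
    ring
  rw [Δ_eq, hO, ← div_eq_inv_mul, div_mul_div_comm, eq_div_iff (by simp [h1, h2, h4, h5, h6])]
  ring
end

section
/- In the field ℚ(t) of rational functions, Δ_{2,2,4,4}(t) = P(t)·Or_{2,2,4,4}(t), where P(t) = (1−t⁶)(1−t⁸)/((1−t²)(1−t⁴)(1−t⁴)(1−t³)). (This is the identity ∏_{j=1}^{2} ζ̄_{X,j}(t) = P_{X̃₀}(t)·Or_{X̃₀}(t) of the main theorem for the virtual singularity X = K′_{1,−1}, whose dual series has k=0 element K′_{1,0} with weight system (2,4,4,3; 6,8) and whose Gabrielov numbers are 2,2;4,4.) -/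
/-!
Since `t` is transcendental over `ℚ`, all denominators are nonzero (`one_sub_t_pow_ne_zero`).
Each quotient `(t ^ n - 1) / (t - 1)` on the left is the finite geometric sum
`1 + t + ⋯ + t ^ (n - 1)`, so the left side is a polynomial in `t`, and multiplying by the
denominators of the right side leaves an identity between integer polynomials.
-/

open Finset

/-- `t` is not a root of unity, as it is transcendental; no denominator in the identity is zero. -/
lemma one_sub_t_pow_ne_zero {n : ℕ} (hn : n ≠ 0) : 1 - t ^ n ≠ 0 := by
  intro h
  have h2 : (Polynomial.X : Polynomial ℚ) ^ n = 1 := by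
    apply RatFunc.algebraMap_injective ℚ
    rw [map_pow, RatFunc.algebraMap_X, map_one]
    exact (sub_eq_zero.mp h).symm
  have h3 := congrArg Polynomial.natDegree h2
  rw [Polynomial.natDegree_X_pow, Polynomial.natDegree_one] at h3
  exact hn h3

/-- The main theorem for the virtual singularity `K'_{1,-1}` (Gabrielov numbers
`2,2;4,4`; dual `k=0` element `K'_{1,0}` with weight system `(2,4,4,3;6,8)`). -/
theorem stmt_13 :
    Δ ![2, 2, 4, 4]
      = (1 - t ^ 6) * (1 - t ^ 8) /
          ((1 - t ^ 2) * (1 - t ^ 4) * (1 - t ^ 4) * (1 - t ^ 3))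
        * Orb ![2, 2, 4, 4] := by
  have h1 : t - 1 ≠ 0 := fun h => one_sub_t_pow_ne_zero one_ne_zero (by linear_combination -h)
  have h1' : 1 - t ≠ 0 := by simpa using one_sub_t_pow_ne_zero one_ne_zero
  have h2 := one_sub_t_pow_ne_zero two_ne_zero
  have h3 := one_sub_t_pow_ne_zero three_ne_zero
  have h4 := one_sub_t_pow_ne_zero four_ne_zero
  have e0 : (univ : Finset (Fin 4)).erase 0 = {1, 2, 3} := by decide
  have e1 : (univ : Finset (Fin 4)).erase 1 = {0, 2, 3} := by decide
  have e2 : (univ : Finset (Fin 4)).erase 2 = {0, 1, 3} := by decide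
  have e3 : (univ : Finset (Fin 4)).erase 3 = {0, 1, 2} := by decide
  have g2 : (t ^ 2 - 1) / (t - 1) = 1 + t := by rw [div_eq_iff h1]; ring
  have g3 : (t ^ 3 - 1) / (t - 1) = 1 + t + t ^ 2 := by rw [div_eq_iff h1]; ring
  have g4 : (t ^ 4 - 1) / (t - 1) = 1 + t + t ^ 2 + t ^ 3 := by rw [div_eq_iff h1]; ring
  have hΔ : Δ ![2, 2, 4, 4] =
      (t ^ 3 - 2 * t ^ 2 - 2 * t + 1) * ((1 + t) ^ 2 * (1 + t + t ^ 2 + t ^ 3) ^ 2)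
      + t ^ 2 * (2 * ((1 + t) * (1 + t + t ^ 2 + t ^ 3) ^ 2)
        + 2 * ((1 + t + t ^ 2) * ((1 + t) ^ 2 * (1 + t + t ^ 2 + t ^ 3)))) := by
    simp [Δ, Fin.prod_univ_four, Fin.sum_univ_four, e0, e1, e2, e3, g2, g3, g4, div_self h1,
      -Finset.prod_div_distrib]
    ring
  have hOrb : Orb ![2, 2, 4, 4] = ((1 - t) ^ 2)⁻¹ * ((1 - t ^ 2) ^ 2 * (1 - t ^ 4) ^ 2) := by
    rw [Orb, Fin.prod_univ_four]
    change _ * ((1 - t ^ 2) * (1 - t ^ 2) * (1 - t ^ 4) * (1 - t ^ 4)) = _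
    ring
  rw [hΔ, hOrb]
  rw [← div_eq_inv_mul, div_mul_div_comm, eq_div_iff (mul_ne_zero (mul_ne_zero (mul_ne_zero (mul_ne_zero h2 h4) h4) h3) (pow_ne_zero 2 h1'))]
  ring
end

section
/- In the field ℚ(t) of rational functions, Δ_{2,3,2,5}(t) = P(t)·Or_{2,3,2,5}(t), where P(t) = (1−t⁷)(1−t⁸)/((1−t²)(1−t⁵)(1−t⁴)(1−t³)). (This is the identity ∏_{j=1}^{2} ζ̄_{X,j}(t) = P_{X̃₀}(t)·Or_{X̃₀}(t) of the main theorem for the virtual singularity X = L♯_{1,−1}, whose dual series has k=0 element L♯_{1,0} with weight system (2,5,4,3; 7,8) and whose Gabrielov numbers are 2,3;2,5.) -/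
open Finset

/-- The factor `(tⁿ - 1) / (t - 1)` as a polynomial in `t`. -/
lemma t_pow_sub_one_div (n : ℕ) : (t ^ n - 1) / (t - 1) = ∑ k ∈ range n, t ^ k := by
  have h : t ≠ 1 := fun h ↦ one_sub_t_pow_ne_zero one_ne_zero (by simp [h])
  exact (geom_sum_eq h n).symm

/-- The main theorem for the virtual singularity `L♯_{1,-1}` (Gabrielov numbers
`2,3;2,5`; dual `k=0` element `L♯_{1,0}` with weight system `(2,5,4,3;7,8)`). -/
theorem stmt_16 :
    Δ ![2, 3, 2, 5]
      = (1 - t ^ 7) * (1 - t ^ 8) /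
          ((1 - t ^ 2) * (1 - t ^ 5) * (1 - t ^ 4) * (1 - t ^ 3))
        * Orb ![2, 3, 2, 5] := by
  have h1 : 1 - t ≠ 0 := by simpa using one_sub_t_pow_ne_zero one_ne_zero
  have h2 : 1 - t ^ 2 ≠ 0 := one_sub_t_pow_ne_zero (by norm_num)
  have h3 : 1 - t ^ 3 ≠ 0 := one_sub_t_pow_ne_zero (by norm_num)
  have h4 : 1 - t ^ 4 ≠ 0 := one_sub_t_pow_ne_zero (by norm_num)
  have h5 : 1 - t ^ 5 ≠ 0 := one_sub_t_pow_ne_zero (by norm_num)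
  have hR : (1 - t ^ 7) * (1 - t ^ 8) /
          ((1 - t ^ 2) * (1 - t ^ 5) * (1 - t ^ 4) * (1 - t ^ 3))
        * Orb ![2, 3, 2, 5] = (1 + t ^ 4) * (1 + t) * ∑ k ∈ range 7, t ^ k := by
    simp only [Orb, Fin.prod_univ_four, Matrix.cons_val, sum_range_succ, sum_range_zero]
    field_simp
    ring
  have e0 : (univ.erase 0 : Finset (Fin 4)) = {1, 2, 3} := by decide
  have e1 : (univ.erase 1 : Finset (Fin 4)) = {0, 2, 3} := by decide
  have e2 : (univ.erase 2 : Finset (Fin 4)) = {0, 1, 3} := by decide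
  have e3 : (univ.erase 3 : Finset (Fin 4)) = {0, 1, 2} := by decide
  rw [hR]
  simp only [Δ, t_pow_sub_one_div, Fin.prod_univ_four, Fin.sum_univ_four, e0, e1, e2, e3]
  simp [sum_range_succ]
  ring
end
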